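/- arXiv:1512.01150 — 2 statements merged into one kernel-verified Lean document; each statement's English description precedes it below -/
import Mathlib

section
/- Let α ≥ 1 be odd and let S be a binary matrix with pairwise distinct rows that contains the all-zero vector as a row, such that every pairwise row Hamming distance lies in {α, α+1, α+2}. Then every nonzero row has weight α, α+1, or α+2, and for any two distinct nonzero rows i and j: if both have weight α then |W_i ∩ W_j| = ⌊α/2⌋; if the weights are α and α+1 then |W_i ∩ W_j| ∈ {⌊α/2⌋, ⌈α/2⌉}; if the weights are α and α+2 then |W_i ∩ W_j| = ⌈α/2⌉; if both have weight α+1 then |W_i ∩ W_j| = ⌈α/2⌉; if the weights are α+1 and α+2 then |W_i ∩ W_j| ∈ {⌈α/2⌉, ⌈α/2⌉+1}; and if both have weight α+2 then |W_i ∩ W_j| = ⌈α/2⌉+1. -/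
/-!
The distance of two rows is the size of the symmetric difference of their supports, so
`d(i, j) + 2 |W_i ∩ W_j| = |W_i| + |W_j|` (`hammingDist_add_two_mul_card_inter`).
Against the zero row this says that the weight is a distance, which gives the possible weights.
For two nonzero rows it fixes the parity of `d(i, j)`: since `α` is odd, weights of equal parity
force `d(i, j) = α + 1`, and weights of opposite parity leave `d(i, j) ∈ {α, α + 2}`. Solving for
`|W_i ∩ W_j|` gives each case.
-/

/-- The support of row `i`: the set of columns where the binary matrix `S` has a 1. -/
def rowSupport {n d : ℕ} (S : Fin n → Fin d → Bool) (i : Fin n) : Finset (Fin d) :=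
  Finset.univ.filter fun c => S i c = true

theorem hammingDist_add_two_mul_card_inter {n d : ℕ} (S : Fin n → Fin d → Bool) (i j : Fin n) :
    hammingDist (S i) (S j) + 2 * (rowSupport S i ∩ rowSupport S j).card =
      (rowSupport S i).card + (rowSupport S j).card := by
  -- All four cardinalities are sums of indicators over columns; the identity holds columnwise.
  simp only [hammingDist, rowSupport, ← Finset.filter_and, Finset.card_filter, Finset.mul_sum,
    ← Finset.sum_add_distrib]
  refine Finset.sum_congr rfl fun c _ => ?_
  cases S i c <;> cases S j c <;> simp

theorem stmt8 {n d : ℕ} (α : ℕ) (hα : 1 ≤ α) (hodd : Odd α)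
    (S : Fin n → Fin d → Bool)
    (hrows : ∀ i j : Fin n, i ≠ j → S i ≠ S j)
    (i₀ : Fin n) (hzero : ∀ c, S i₀ c = false)
    (hham : ∀ i j : Fin n, i ≠ j →
      hammingDist (S i) (S j) = α ∨ hammingDist (S i) (S j) = α + 1 ∨
        hammingDist (S i) (S j) = α + 2) :
    (∀ i : Fin n, i ≠ i₀ →
      (rowSupport S i).card = α ∨ (rowSupport S i).card = α + 1 ∨
        (rowSupport S i).card = α + 2) ∧
    (∀ i j : Fin n, i ≠ j → i ≠ i₀ → j ≠ i₀ →
      ((rowSupport S i).card = α → (rowSupport S j).card = α →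
        (rowSupport S i ∩ rowSupport S j).card = α / 2) ∧
      ((rowSupport S i).card = α → (rowSupport S j).card = α + 1 →
        (rowSupport S i ∩ rowSupport S j).card = α / 2 ∨
          (rowSupport S i ∩ rowSupport S j).card = (α + 1) / 2) ∧
      ((rowSupport S i).card = α → (rowSupport S j).card = α + 2 →
        (rowSupport S i ∩ rowSupport S j).card = (α + 1) / 2) ∧
      ((rowSupport S i).card = α + 1 → (rowSupport S j).card = α + 1 →
        (rowSupport S i ∩ rowSupport S j).card = (α + 1) / 2) ∧
      ((rowSupport S i).card = α + 1 → (rowSupport S j).card = α + 2 →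
        (rowSupport S i ∩ rowSupport S j).card = (α + 1) / 2 ∨
          (rowSupport S i ∩ rowSupport S j).card = (α + 1) / 2 + 1) ∧
      ((rowSupport S i).card = α + 2 → (rowSupport S j).card = α + 2 →
        (rowSupport S i ∩ rowSupport S j).card = (α + 1) / 2 + 1)) := by
  have hempty : rowSupport S i₀ = ∅ := by simp [rowSupport, hzero]
  obtain ⟨k, rfl⟩ := hodd
  refine ⟨fun i hi => ?_, fun i j hij _ _ => ?_⟩
  · have h := hammingDist_add_two_mul_card_inter S i i₀
    simp only [hempty, Finset.inter_empty, Finset.card_empty, mul_zero, add_zero] at h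
    rw [← h]
    exact hham i i₀ hi
  · have h := hammingDist_add_two_mul_card_inter S i j
    have hd := hham i j hij
    refine ⟨?_, ?_, ?_, ?_, ?_, ?_⟩ <;> intro hi hj <;> omega
end

section
/- Let α ≥ 1 be odd and let S be a binary matrix with n pairwise distinct rows that contains the all-zero vector as a row, such that every pairwise row Hamming distance lies in {α, α+1}. Let n_α and n_{α+1} denote the numbers of rows of weight α and α+1, respectively. If n_α ≥ (α+1)² − (α+1) + 2, then n_{α+1} = 0 (so n = n_α + 1), and for every natural number k, S has a distinguishing set of size at most k if and only if k ≥ n_α. -/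
/-!
Write `α = 2 l + 1`. By parity of Hamming distances, two rows of weight `α` have supports meeting
in exactly `l` columns, and a row of weight `α + 1` meets each row of weight `α` in exactly `l + 1`
columns.

The supports of the `m` rows of weight `α` form a sunflower (a case of Deza's theorem, proved in
`exists_core`). If a column `x` lies in `a` of these supports and misses `b` of them, then giving
weight `b` to the supports containing `x` and `-a` to the others and computing the squared norm of
the weighted sum of indicator vectors yields `a b ≤ (l + 1) m` (`degree_mul_le`). For large `m` this
forces `a ≤ l + 1` or `b ≤ l + 1`. Counting incidences along one support shows that it contains at
least `l` columns of high degree; on the other hand there are at most `l` such columns, since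
`l + 1` of them would lie in two common supports. So the columns of high degree are the core.

A row of weight `α + 1` would have to meet all `m` pairwise disjoint petals, which is impossible
since `m > α + 1`. One column from each petal is a distinguishing set. Conversely a distinguishing
set meets all petals but at most one, and if it misses a petal it must meet the core in order to
separate that row from the zero row; either way it has at least `m` columns.
-/

/-- A set `K` of column indices is a distinguishing set for the matrix `S`
if every pair of distinct rows differs in some column of `K`. -/
def Distinguishes {n : ℕ} {κ α : Type*} (S : Fin n → κ → α) (K : Finset κ) : Prop :=
  ∀ i j : Fin n, i ≠ j → ∃ c ∈ K, S i c ≠ S j c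

open Finset

section Sunflower

variable {ι κ : Type*} [DecidableEq ι] [DecidableEq κ]

/-- The squared norm of a combination of indicator vectors of sets of size `2 l + 1` meeting
pairwise in `l` points. -/
lemma sum_sq_indicator [Fintype κ] (T : Finset ι) (W : ι → Finset κ) (l : ℕ)
    (hW : ∀ i ∈ T, #(W i) = 2 * l + 1)
    (hI : ∀ i ∈ T, ∀ j ∈ T, i ≠ j → #(W i ∩ W j) = l) (c : ι → ℤ) :
    ∑ y, (∑ i ∈ T, c i * (if y ∈ W i then 1 else 0)) ^ 2
      = l * (∑ i ∈ T, c i) ^ 2 + (l + 1) * ∑ i ∈ T, c i ^ 2 := by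
  have h1 : ∀ i ∈ T, ∀ j ∈ T, (∑ y : κ, (c i * (if y ∈ W i then 1 else 0)) *
      (c j * (if y ∈ W j then 1 else 0)))
      = l * (c i * c j) + (if i = j then (l + 1) * c i ^ 2 else 0) := by
    intro i hi j hj
    have h2 : (∑ y : κ, (c i * (if y ∈ W i then 1 else 0)) *
      (c j * (if y ∈ W j then 1 else 0))) = c i * c j * (#(W i ∩ W j) : ℤ) := by
      have h3 : (#(W i ∩ W j) : ℤ) = ∑ y : κ, if y ∈ W i ∩ W j then 1 else 0 := by
        rw [Finset.sum_boole, Finset.filter_mem_eq_inter, Finset.univ_inter]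
      rw [h3, Finset.mul_sum]
      refine Finset.sum_congr rfl fun y _ => ?_
      by_cases hy : y ∈ W i <;> by_cases hy' : y ∈ W j <;> simp [hy, hy']
    rw [h2]
    by_cases hij : i = j
    · subst hij
      simp only [inter_self, hW i hi, if_true]
      push_cast
      ring
    · rw [hI i hi j hj hij, if_neg hij]
      ring
  simp_rw [sq (∑ i ∈ T, _), Finset.sum_mul_sum]
  rw [Finset.sum_comm]
  simp_rw [Finset.sum_comm (s := (univ : Finset κ))]
  rw [Finset.sum_congr rfl fun i hi => Finset.sum_congr rfl fun j hj => h1 i hi j hj]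
  simp only [Finset.sum_add_distrib, Finset.mul_sum]
  congr 1
  refine Finset.sum_congr rfl fun i hi => ?_
  simp [hi]

lemma degree_mul_le [Fintype κ] (T : Finset ι) (W : ι → Finset κ) (l : ℕ)
    (hW : ∀ i ∈ T, #(W i) = 2 * l + 1)
    (hI : ∀ i ∈ T, ∀ j ∈ T, i ≠ j → #(W i ∩ W j) = l) (x : κ) :
    #{i ∈ T | x ∈ W i} * #{i ∈ T | x ∉ W i} ≤ (l + 1) * #T := by
  have hm := Finset.card_filter_add_card_filter_not (s := T) (fun i => x ∈ W i)
  set a := #{i ∈ T | x ∈ W i} with ha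
  set b := #{i ∈ T | x ∉ W i} with hb
  have key := sum_sq_indicator T W l hW hI (fun i => if x ∈ W i then (b : ℤ) else -a)
  have hs : ∑ i ∈ T, (if x ∈ W i then (b : ℤ) else -a) = 0 := by
    rw [Finset.sum_ite]
    simp only [sum_const, ← ha, ← hb, nsmul_eq_mul]
    ring
  have hs2 : ∑ i ∈ T, (if x ∈ W i then (b : ℤ) else -a) ^ 2 = a * b * (a + b) := by
    simp only [ite_pow]
    rw [Finset.sum_ite]
    simp only [sum_const, ← ha, ← hb, nsmul_eq_mul]
    ring
  have hx : ∑ i ∈ T, (if x ∈ W i then (b : ℤ) else -a) * (if x ∈ W i then 1 else 0)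
      = a * b := by
    have : ∀ i ∈ T, (if x ∈ W i then (b : ℤ) else -a) * (if x ∈ W i then 1 else 0)
        = if x ∈ W i then (b : ℤ) else 0 := by
      intro i _
      split_ifs <;> simp
    rw [Finset.sum_congr rfl this, Finset.sum_ite]
    simp only [sum_const, ← ha, nsmul_eq_mul, mul_zero, add_zero]
  have hle := Finset.single_le_sum
    (f := fun y => (∑ i ∈ T, (if x ∈ W i then (b : ℤ) else -a) * (if y ∈ W i then 1 else 0)) ^ 2)
    (fun y _ => sq_nonneg _) (mem_univ x)
  rw [key, hs, hs2, hx] at hle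
  rcases Nat.eq_zero_or_pos (a * b) with h0 | h0
  · rw [h0]
    exact Nat.zero_le _
  · rw [← hm]
    have h0' : (0 : ℤ) < a * b := by exact_mod_cast h0
    have : (a * b : ℤ) ≤ (l + 1) * (a + b) := by
      by_contra hc
      push Not at hc
      nlinarith
    exact_mod_cast this

lemma sum_degree (T : Finset ι) (W : ι → Finset κ) (l : ℕ)
    (hW : ∀ i ∈ T, #(W i) = 2 * l + 1)
    (hI : ∀ i ∈ T, ∀ j ∈ T, i ≠ j → #(W i ∩ W j) = l) (i : ι) (hi : i ∈ T) :
    ∑ x ∈ W i, #{j ∈ T | x ∈ W j} = #T * l + (l + 1) := by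
  have h := Finset.sum_card_bipartiteAbove_eq_sum_card_bipartiteBelow
    (s := W i) (t := T) (fun x j => x ∈ W j)
  simp only [bipartiteAbove, bipartiteBelow] at h
  rw [h]
  have h1 : ∀ j ∈ T, #{x ∈ W i | x ∈ W j} = l + if i = j then l + 1 else 0 := by
    intro j hj
    rw [Finset.filter_mem_eq_inter]
    by_cases hij : i = j
    · subst hij
      rw [inter_self, hW i hi, if_pos rfl]
      ring
    · rw [hI i hi j hj hij, if_neg hij, add_zero]
  rw [Finset.sum_congr rfl h1, Finset.sum_add_distrib]
  simp [hi]

/-- A large family of `(2 l + 1)`-sets meeting pairwise in `l` points is a sunflower: all its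
members share a common core of size `l`. For `l = 0` the core is empty and no bound on the size of the
family is needed. -/
lemma exists_core [Fintype κ] (T : Finset ι) (W : ι → Finset κ) (l : ℕ)
    (hW : ∀ i ∈ T, #(W i) = 2 * l + 1)
    (hI : ∀ i ∈ T, ∀ j ∈ T, i ≠ j → #(W i ∩ W j) = l)
    (hT : l = 0 ∨ (l + 2) ^ 2 < #T) :
    ∃ C : Finset κ, #C = l ∧ ∀ i ∈ T, C ⊆ W i := by
  rcases Nat.eq_zero_or_pos l with rfl | hl
  · exact ⟨∅, rfl, fun _ _ => empty_subset _⟩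
  have hT : (l + 2) ^ 2 < #T := hT.resolve_left (Nat.pos_iff_ne_zero.mp hl)
  -- the columns of high degree
  set B : Finset κ := {x | l + 1 < #{i ∈ T | x ∈ W i}} with hB
  have hdich : ∀ x ∈ B, #{i ∈ T | x ∉ W i} ≤ l + 1 := by
    intro x hx
    have h1 : l + 1 < #{i ∈ T | x ∈ W i} := by simpa [hB] using hx
    have h2 := degree_mul_le T W l hW hI x
    have hm := Finset.card_filter_add_card_filter_not (s := T) (fun i => x ∈ W i)
    generalize #{i ∈ T | x ∈ W i} = a at *
    generalize #{i ∈ T | x ∉ W i} = b at *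
    by_contra hc
    push Not at hc
    obtain ⟨a', rfl⟩ := Nat.exists_eq_add_of_le (show l + 2 ≤ a from h1)
    obtain ⟨b', rfl⟩ := Nat.exists_eq_add_of_le (show l + 2 ≤ b from hc)
    rw [← hm] at h2 hT
    nlinarith [Nat.zero_le (a' * b')]
  have hge : ∀ i ∈ T, l ≤ #(W i ∩ B) := by
    intro i hi
    by_contra hc
    push Not at hc
    have hs := sum_degree T W l hW hI i hi
    have hp := Finset.card_filter_add_card_filter_not (s := W i) (fun x => x ∈ B)
    have hle := Finset.sum_le_sum (s := W i) (f := fun x => #{j ∈ T | x ∈ W j})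
      (g := fun x => if x ∈ B then #T else l + 1) (by
        intro x _
        by_cases hx : x ∈ B
        · simpa [hx] using Finset.card_filter_le _ _
        · simpa [hx] using (by simpa [hB] using hx : #{i ∈ T | x ∈ W i} ≤ l + 1))
    rw [hs, Finset.sum_ite] at hle
    simp only [sum_const, smul_eq_mul] at hle
    rw [hW i hi] at hp
    rw [← Finset.filter_mem_eq_inter] at hc
    generalize #{x ∈ W i | x ∈ B} = p at *
    generalize #{x ∈ W i | x ∉ B} = q at *
    generalize #T = m at *
    obtain ⟨e, rfl⟩ := Nat.exists_eq_add_of_lt hc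
    have hq : q = p + 2 * e + 3 := by omega
    subst hq
    nlinarith [Nat.zero_le (p * e), Nat.zero_le (e * e), Nat.zero_le (e * m),
      mul_le_mul_of_nonneg_left hT.le (Nat.zero_le e)]
  have hBle : #B ≤ l := by
    by_contra hc
    push Not at hc
    obtain ⟨C, hCB, hC⟩ := Finset.exists_subset_card_eq (show l + 1 ≤ #B from hc)
    -- members of the family missing some point of `C`; at least two members are left over
    set D := C.biUnion fun x => {i ∈ T | x ∉ W i} with hD
    have hDc : #D ≤ (l + 1) * (l + 1) := by
      have := Finset.card_biUnion_le_card_mul C (fun x => {i ∈ T | x ∉ W i}) (l + 1)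
        (fun x hx => hdich x (hCB hx))
      rwa [hC] at this
    have h2 : 1 < #(T \ D) := by
      have := Finset.le_card_sdiff D T
      nlinarith [Nat.sub_add_cancel (show #D ≤ #T by nlinarith)]
    obtain ⟨i, hi, j, hj, hij⟩ := Finset.one_lt_card.mp h2
    have hsub : ∀ i ∈ T \ D, C ⊆ W i := by
      intro i hi x hx
      by_contra hxi
      rw [mem_sdiff] at hi
      exact hi.2 (mem_biUnion.mpr ⟨x, hx, mem_filter.mpr ⟨hi.1, hxi⟩⟩)
    have := Finset.card_le_card (subset_inter (hsub i hi) (hsub j hj))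
    rw [hC, hI i (mem_sdiff.mp hi).1 j (mem_sdiff.mp hj).1 hij] at this
    omega
  have hsub : ∀ i ∈ T, B ⊆ W i := fun i hi =>
    inter_eq_right.mp (Finset.eq_of_subset_of_card_le inter_subset_right (hBle.trans (hge i hi)))
  obtain ⟨i, hi⟩ : T.Nonempty := card_pos.mp (by omega)
  refine ⟨B, le_antisymm hBle ?_, hsub⟩
  exact (hge i hi).trans (card_le_card inter_subset_right)

end Sunflower

lemma hammingDist_add_inter {n d : ℕ} (S : Fin n → Fin d → Bool) (i j : Fin n) :
    hammingDist (S i) (S j) + 2 * #(rowSupport S i ∩ rowSupport S j)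
      = #(rowSupport S i) + #(rowSupport S j) := by
  unfold hammingDist rowSupport
  rw [← Finset.filter_and]
  simp only [Finset.card_filter, Finset.mul_sum, ← Finset.sum_add_distrib]
  refine Finset.sum_congr rfl fun c _ => ?_
  cases S i c <;> cases S j c <;> simp

lemma mem_rowSupport {n d : ℕ} {S : Fin n → Fin d → Bool} {i : Fin n} {c : Fin d} :
    c ∈ rowSupport S i ↔ S i c = true := by
  simp [rowSupport]

theorem stmt10 {n d : ℕ} (α : ℕ) (hα : 1 ≤ α) (hodd : Odd α)
    (S : Fin n → Fin d → Bool)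
    (hrows : ∀ i j : Fin n, i ≠ j → S i ≠ S j)
    (i₀ : Fin n) (hzero : ∀ c, S i₀ c = false)
    (hham : ∀ i j : Fin n, i ≠ j →
      hammingDist (S i) (S j) = α ∨ hammingDist (S i) (S j) = α + 1)
    (hbig : (α + 1) ^ 2 - (α + 1) + 2 ≤
      (Finset.univ.filter fun i : Fin n => (rowSupport S i).card = α).card) :
    (Finset.univ.filter fun i : Fin n => (rowSupport S i).card = α + 1).card = 0 ∧
    n = (Finset.univ.filter fun i : Fin n => (rowSupport S i).card = α).card + 1 ∧
    (∀ k : ℕ, (∃ K : Finset (Fin d), K.card ≤ k ∧ Distinguishes S K) ↔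
      (Finset.univ.filter fun i : Fin n => (rowSupport S i).card = α).card ≤ k) := by
  obtain ⟨l, rfl⟩ := hodd
  have hemp : rowSupport S i₀ = ∅ := by
    ext c
    simp [mem_rowSupport, hzero]
  have hwt : ∀ i, i ≠ i₀ → #(rowSupport S i) = 2 * l + 1 ∨ #(rowSupport S i) = 2 * l + 1 + 1 := by
    intro i hi
    have h := hammingDist_add_inter S i i₀
    rw [hemp, inter_empty, card_empty] at h
    have := hham i i₀ hi
    omega
  set T : Finset (Fin n) := univ.filter fun i => #(rowSupport S i) = 2 * l + 1 with hTdef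
  have hW : ∀ i ∈ T, #(rowSupport S i) = 2 * l + 1 := fun i hi => (mem_filter.mp hi).2
  have hI : ∀ i ∈ T, ∀ j ∈ T, i ≠ j → #(rowSupport S i ∩ rowSupport S j) = l := by
    intro i hi j hj hij
    have h := hammingDist_add_inter S i j
    have := hham i j hij
    rw [hW i hi, hW j hj] at h
    omega
  have hbig' : 4 * l ^ 2 + 6 * l + 4 ≤ #T := by
    have : (2 * l + 1 + 1) ^ 2 = 4 * l ^ 2 + 6 * l + 2 + (2 * l + 1 + 1) := by ring
    omega
  obtain ⟨C, hCc, hC⟩ := exists_core T (rowSupport S) l hW hI (by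
    rcases Nat.eq_zero_or_pos l with h | h
    · exact Or.inl h
    · right
      nlinarith)
  have hint : ∀ i ∈ T, ∀ j ∈ T, i ≠ j → rowSupport S i ∩ rowSupport S j = C := by
    intro i hi j hj hij
    refine (Finset.eq_of_subset_of_card_le (subset_inter (hC i hi) (hC j hj)) ?_).symm
    rw [hI i hi j hj hij, hCc]
  have hpetal : ∀ i ∈ T, ∀ j ∈ T, ∀ c, c ∈ rowSupport S i → c ∈ rowSupport S j → c ∉ C →
      i = j := by
    intro i hi j hj c hci hcj hcC
    by_contra hij
    exact hcC (hint i hi j hj hij ▸ mem_inter.mpr ⟨hci, hcj⟩)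
  have : Nonempty (Fin d) := by
    obtain ⟨i, hi⟩ : T.Nonempty := card_pos.mp (by omega)
    obtain ⟨c, -⟩ : (rowSupport S i).Nonempty := card_pos.mp (by rw [hW i hi]; omega)
    exact ⟨c⟩
  have hnone : ∀ j, #(rowSupport S j) ≠ 2 * l + 1 + 1 := by
    intro j hj
    -- such a row meets every petal, and the petals are disjoint
    have hmeet : ∀ i ∈ T, ∃ c, c ∈ rowSupport S j ∧ c ∈ rowSupport S i ∧ c ∉ C := by
      intro i hi
      have hij : i ≠ j := by
        rintro rfl
        have := hW i hi
        omega
      have h := hammingDist_add_inter S i j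
      have h' := hham i j hij
      rw [hW i hi, hj] at h
      obtain ⟨c, hc, hcC⟩ := Finset.exists_mem_notMem_of_card_lt_card
        (show #C < #(rowSupport S i ∩ rowSupport S j) by omega)
      exact ⟨c, (mem_inter.mp hc).2, (mem_inter.mp hc).1, hcC⟩
    choose! f hf1 hf2 hf3 using hmeet
    have := Finset.card_le_card_of_injOn f (fun i hi => hf1 i hi) (s := T) (by
      intro i hi i' hi' h
      exact hpetal i hi i' hi' (f i) (hf2 i hi) (h ▸ hf2 i' hi') (hf3 i hi))
    rw [hj] at this
    nlinarith
  have hi₀T : i₀ ∉ T := fun h => by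
    have := hW i₀ h
    rw [hemp, card_empty] at this
    omega
  have hTall : ∀ i, i ≠ i₀ → i ∈ T := fun i hi =>
    mem_filter.mpr ⟨mem_univ _, (hwt i hi).resolve_right (hnone i)⟩
  refine ⟨?_, ?_, ?_⟩
  · rw [card_eq_zero, filter_eq_empty_iff]
    exact fun j _ => hnone j
  · have : insert i₀ T = univ := by
      ext i
      by_cases h : i = i₀ <;> simp [h, hTall]
    rw [← card_insert_of_notMem hi₀T, this, card_univ, Fintype.card_fin]
  intro k
  constructor
  · rintro ⟨K, hKk, hK⟩
    refine le_trans ?_ hKk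
    classical
    -- send a row to a column of `K` in its petal, or, for a missed petal, to one of `K` in the core
    have hex : ∀ i ∈ T, ∃ c ∈ K, c ∈ rowSupport S i ∧
        ((∃ c' ∈ K, c' ∈ rowSupport S i ∧ c' ∉ C) → c ∉ C) := by
      intro i hi
      by_cases h : ∃ c' ∈ K, c' ∈ rowSupport S i ∧ c' ∉ C
      · obtain ⟨c, h1, h2, h3⟩ := h
        exact ⟨c, h1, h2, fun _ => h3⟩
      · obtain ⟨c, h1, h2⟩ := hK i i₀ (fun h => hi₀T (h ▸ hi))
        refine ⟨c, h1, ?_, fun h' => absurd h' h⟩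
        rw [hzero] at h2
        simpa [mem_rowSupport] using h2
    choose! f hf1 hf2 hf3 using hex
    refine Finset.card_le_card_of_injOn f (fun i hi => hf1 i hi) ?_
    intro i hi j hj hij
    by_contra hne
    have hfC : f i ∈ C := by
      by_contra h
      exact hne (hpetal i hi j hj (f i) (hf2 i hi) (hij ▸ hf2 j hj) h)
    have hfC' : f j ∈ C := hij ▸ hfC
    -- both petals are missed by `K`, so rows `i` and `j` agree on `K`
    obtain ⟨c, hc, hd⟩ := hK i j hne
    by_cases hcC : c ∈ C
    · exact hd ((mem_rowSupport.mp (hC i hi hcC)).trans (mem_rowSupport.mp (hC j hj hcC)).symm)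
    · have h1 : c ∉ rowSupport S i := fun h => hf3 i hi ⟨c, hc, h, hcC⟩ hfC
      have h2 : c ∉ rowSupport S j := fun h => hf3 j hj ⟨c, hc, h, hcC⟩ hfC'
      rw [mem_rowSupport, Bool.not_eq_true] at h1 h2
      exact hd (h1.trans h2.symm)
  · intro hk
    have hex : ∀ i ∈ T, ∃ c, c ∈ rowSupport S i ∧ c ∉ C := fun i hi =>
      Finset.exists_mem_notMem_of_card_lt_card (by rw [hW i hi, hCc]; omega)
    choose! f hf1 hf2 using hex
    refine ⟨T.image f, card_image_le.trans hk, ?_⟩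
    have hdist : ∀ i ∈ T, ∀ j, i ≠ j → S i (f i) ≠ S j (f i) := by
      intro i hi j hij h
      rw [mem_rowSupport.mp (hf1 i hi)] at h
      by_cases hj : j = i₀
      · rw [hj, hzero] at h
        exact absurd h (by decide)
      · exact hij (hpetal i hi j (hTall j hj) (f i) (hf1 i hi) (mem_rowSupport.mpr h.symm)
          (hf2 i hi))
    intro i j hij
    by_cases hi : i = i₀
    · have hj := hTall j (fun h => hij (hi.trans h.symm))
      exact ⟨f j, mem_image_of_mem f hj, (hdist j hj i hij.symm).symm⟩
    · exact ⟨f i, mem_image_of_mem f (hTall i hi), hdist i (hTall i hi) j hij⟩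
end
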